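/- Let N ≥ 1, T > 0, and let constants L₁, N₁ ≥ 0 and 0 < δ ≤ M₁ be given. Let c : ℝ^N × [0,T] → ℝ be Borel measurable, continuously differentiable in x for almost every t, with |c(x,t) − c(y,t)| ≤ L₁|x − y|, |D_x c(x,t) − D_x c(y,t)| ≤ N₁|x − y| and δ ≤ c(x,t) ≤ M₁ for all x, y ∈ ℝ^N and almost every t ∈ [0,T]. Let y₀, p₀ : [0,T] → ℝ^N be absolutely continuous with p₀(t) ≠ 0 for all t, |p₀(T)| = 1, ẏ₀(t) = c(y₀(t), t) p₀(t)/|p₀(t)| and ṗ₀(t) = −D_x c(y₀(t), t) |p₀(t)| for almost every t, and let P : [0,T] → M_N(ℝ) be absolutely continuous with P(T) = Id and Ṗ(t) = (1/|p₀(t)|) p₀(t) (D_x c(y₀(t), t))ᵀ P(t) for almost every t. Set θ₀ = p₀(T). Then there exists γ > 0, depending only on T, L₁, N₁, M₁ and δ, such that for every θ in the closed unit ball of ℝ^N, the function y_θ(t) = y₀(t) − γ t P(t)(θ₀ − θ) satisfies |ẏ_θ(t)| ≤ c(y_θ(t), t) for almost every t ∈ [0,T]. -/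

import Mathlib

open MeasureTheory

/-!
The linearized flow `q' = ⟪∇c, q⟫ p / |p|` is adjoint to the costate equation, so for `q = P w` the
pairing `⟪p, q⟫` is constant in time. When `w = θ₀ - θ`, strict convexity of the ball bounds its
final value `⟪θ₀, w⟫` below by `|w|² / 2`; with the Grönwall bounds on `|p|` and `|q|` this gives
`⟪e, q⟫ ≥ κ |q|²` on all of `[0, T]`, where `e = p / |p|`. The perturbed arc has velocity
`(c - γ t ⟪∇c, q⟫) e - γ q`. Here `c - γ t ⟪∇c, q⟫` is the first-order Taylor expansion of the
admissible speed at the perturbed point, and the component of `-γ q` along `e` lowers the speed by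
`γ ⟪e, q⟫ ≥ γ κ |q|²`. For small `γ` this gain exceeds both the transversal contribution and the
Taylor remainder, which are of order `γ² |q|²`.
-/

section

open Set Filter Topology TopologicalSpace NormedSpace
open scoped RealInnerProductSpace

section ACPrimitive

variable {F : Type*} [NormedAddCommGroup F] [NormedSpace ℝ F] {a b : ℝ} {u u' : ℝ → F}

/-- `u` is an absolutely continuous primitive of `u'` on the interval with endpoints `a` and `b`;
this is the Carathéodory sense in which an arc satisfies an ordinary differential equation whose
right-hand side is merely measurable in time. -/
structure IsACPrimitive (u u' : ℝ → F) (a b : ℝ) : Prop where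
  absolutelyContinuous : AbsolutelyContinuousOnInterval u a b
  ae_hasDerivAt : ∀ᵐ t ∂volume.restrict (uIcc a b), HasDerivAt u (u' t) t

theorem absolutelyContinuousOnInterval_of_dist_le {X Y : Type*} [PseudoMetricSpace X]
    [PseudoMetricSpace Y] {f : ℝ → X} {g : ℝ → Y} (C : ℝ)
    (hfg : ∀ s ∈ uIcc a b, ∀ t ∈ uIcc a b, dist (f s) (f t) ≤ C * dist (g s) (g t))
    (hg : AbsolutelyContinuousOnInterval g a b) : AbsolutelyContinuousOnInterval f a b := by
  refine squeeze_zero' (.of_forall fun _ ↦ Finset.sum_nonneg fun _ _ ↦ dist_nonneg) ?_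
    (by simpa only [mul_zero] using Tendsto.const_mul C hg)
  rw [eventually_inf_principal]
  refine .of_forall fun I hI ↦ ?_
  rw [Finset.mul_sum]
  exact Finset.sum_le_sum fun i hi ↦ hfg _ (hI.1 i hi).1 _ (hI.1 i hi).2

theorem absolutelyContinuousOnInterval_norm {X : Type*} [SeminormedAddCommGroup X] {u : ℝ → X}
    (hu : AbsolutelyContinuousOnInterval u a b) :
    AbsolutelyContinuousOnInterval (fun t ↦ ‖u t‖) a b := by
  refine absolutelyContinuousOnInterval_of_dist_le 1 (fun s _ t _ ↦ ?_) hu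
  simpa only [one_mul, dist_eq_norm (u s)] using dist_norm_norm_le (u s) (u t)

theorem absolutelyContinuousOnInterval_inner {E : Type*} [NormedAddCommGroup E]
    [InnerProductSpace ℝ E] {u v : ℝ → E} (hu : AbsolutelyContinuousOnInterval u a b)
    (hv : AbsolutelyContinuousOnInterval v a b) :
    AbsolutelyContinuousOnInterval (fun t ↦ ⟪u t, v t⟫) a b := by
  have normSq {w : ℝ → E} (hw : AbsolutelyContinuousOnInterval w a b) :
      AbsolutelyContinuousOnInterval (fun t ↦ ‖w t‖ * ‖w t‖) a b :=
    (absolutelyContinuousOnInterval_norm hw).fun_mul (absolutelyContinuousOnInterval_norm hw)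
  have polarization : (fun t ↦ ⟪u t, v t⟫) = fun t ↦
      (1 / 2 : ℝ) * (‖u t + v t‖ * ‖u t + v t‖ - ‖u t‖ * ‖u t‖ - ‖v t‖ * ‖v t‖) := by
    ext t
    rw [real_inner_eq_norm_add_mul_self_sub_norm_mul_self_sub_norm_mul_self_div_two]
    ring
  rw [polarization]
  exact (((normSq (hu.fun_add hv)).fun_sub (normSq hu)).fun_sub (normSq hv)).const_mul _

namespace IsACPrimitive

theorem of_integral_eq [CompleteSpace F] (hu' : IntegrableOn u' (uIcc a b))
    (hu : ∀ t ∈ uIcc a b, u t = u a + ∫ s in a..t, u' s) : IsACPrimitive u u' a b := by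
  have hint : IntervalIntegrable u' volume a b := by rwa [intervalIntegrable_iff']
  have hint_left {t : ℝ} (ht : t ∈ uIcc a b) : IntervalIntegrable u' volume a t :=
    hint.mono_set (uIcc_subset_uIcc_left ht)
  constructor
  · refine absolutelyContinuousOnInterval_of_dist_le 1 (fun s hs t ht ↦ ?_)
      (hint.norm.absolutelyContinuousOnInterval_intervalIntegral left_mem_uIcc)
    rw [one_mul, hu s hs, hu t ht, dist_add_left, dist_eq_norm, Real.dist_eq,
      intervalIntegral.integral_interval_sub_left (hint_left hs) (hint_left ht),
      intervalIntegral.integral_interval_sub_left (hint_left hs).norm (hint_left ht).norm]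
    exact intervalIntegral.norm_integral_le_abs_integral_norm
  · rw [uIcc, ← restrict_Ioo_eq_restrict_Icc, ae_restrict_iff' measurableSet_Ioo]
    filter_upwards [hint.ae_hasDerivAt_integral] with t ht htI
    have hnhds : uIcc a b ∈ 𝓝 t := Icc_mem_nhds htI.1 htI.2
    refine ((ht (mem_of_mem_nhds hnhds) a left_mem_uIcc).const_add (u a)).congr_of_eventuallyEq ?_
    filter_upwards [hnhds] with s hs using hu s hs

theorem mono (h : IsACPrimitive u u' a b) {c d : ℝ} (hcd : uIcc c d ⊆ uIcc a b) :
    IsACPrimitive u u' c d where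
  absolutelyContinuous := h.absolutelyContinuous.mono hcd
  ae_hasDerivAt := ae_restrict_of_ae_restrict_of_subset hcd h.ae_hasDerivAt

theorem clm_apply {G : Type*} [NormedAddCommGroup G] [NormedSpace ℝ G] {P P' : ℝ → F →L[ℝ] G}
    (h : IsACPrimitive P P' a b) (w : F) :
    IsACPrimitive (fun t ↦ P t w) (fun t ↦ P' t w) a b where
  absolutelyContinuous := absolutelyContinuousOnInterval_of_dist_le ‖w‖
    (fun s _ t _ ↦ by
      simpa only [dist_eq_norm, mul_comm, sub_apply] using (P s - P t).le_opNorm w)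
    h.absolutelyContinuous
  ae_hasDerivAt := by
    filter_upwards [h.ae_hasDerivAt] with t ht
    simpa only [map_zero, add_zero] using ht.clm_apply (hasDerivAt_const t w)

theorem mul {f f' g g' : ℝ → ℝ} (hf : IsACPrimitive f f' a b) (hg : IsACPrimitive g g' a b) :
    IsACPrimitive (fun t ↦ f t * g t) (fun t ↦ f' t * g t + f t * g' t) a b where
  absolutelyContinuous := hf.absolutelyContinuous.fun_mul hg.absolutelyContinuous
  ae_hasDerivAt := by
    filter_upwards [hf.ae_hasDerivAt, hg.ae_hasDerivAt] with t hft hgt using hft.fun_mul hgt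

theorem exp_const_mul (c a b : ℝ) :
    IsACPrimitive (fun t ↦ Real.exp (c * t)) (fun t ↦ Real.exp (c * t) * c) a b where
  absolutelyContinuous := ContDiffOn.absolutelyContinuousOnInterval (by fun_prop)
  ae_hasDerivAt := .of_forall fun t ↦ by
    simpa only [mul_one, id_eq] using ((hasDerivAt_id t).const_mul c).exp

theorem le_of_nonneg {f f' : ℝ → ℝ} (hf : IsACPrimitive f f' a b) (hab : a ≤ b)
    (hf' : ∀ᵐ t ∂volume.restrict (uIcc a b), 0 ≤ f' t) : f a ≤ f b := by
  rw [← sub_nonneg, ← hf.absolutelyContinuous.integral_deriv_eq_sub]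
  refine intervalIntegral.integral_nonneg_of_ae_restrict hab ?_
  rw [← uIcc_of_le hab]
  filter_upwards [hf.ae_hasDerivAt, hf'] with t ht ht' using ht.deriv ▸ ht'

variable {E : Type*} [NormedAddCommGroup E] [InnerProductSpace ℝ E] {u u' v v' : ℝ → E}

theorem inner (hu : IsACPrimitive u u' a b) (hv : IsACPrimitive v v' a b) :
    IsACPrimitive (fun t ↦ ⟪u t, v t⟫) (fun t ↦ ⟪u t, v' t⟫ + ⟪u' t, v t⟫) a b where
  absolutelyContinuous :=
    absolutelyContinuousOnInterval_inner hu.absolutelyContinuous hv.absolutelyContinuous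
  ae_hasDerivAt := by
    filter_upwards [hu.ae_hasDerivAt, hv.ae_hasDerivAt] with t hut hvt using hut.inner ℝ hvt

theorem norm_le_exp_mul_norm_right {L t : ℝ} (hu : IsACPrimitive u u' a b)
    (hL : ∀ᵐ t ∂volume.restrict (uIcc a b), ‖u' t‖ ≤ L * ‖u t‖)
    (ht : t ∈ Icc a b) : ‖u t‖ ≤ Real.exp (L * (b - t)) * ‖u b‖ := by
  have hsub : uIcc t b ⊆ uIcc a b := uIcc_subset_uIcc_right (Icc_subset_uIcc ht)
  have hut := hu.mono hsub
  have hmono : ⟪u t, u t⟫ * Real.exp (2 * L * t) ≤ ⟪u b, u b⟫ * Real.exp (2 * L * b) := by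
    refine ((hut.inner hut).mul (exp_const_mul (2 * L) t b)).le_of_nonneg ht.2 ?_
    filter_upwards [ae_restrict_of_ae_restrict_of_subset hsub hL] with s hs
    have hinner : -(L * ‖u s‖ ^ 2) ≤ ⟪u s, u' s⟫ := by
      have := neg_le_of_abs_le (abs_real_inner_le_norm (u s) (u' s))
      nlinarith [mul_le_mul_of_nonneg_left hs (norm_nonneg (u s))]
    rw [real_inner_comm (u s) (u' s), real_inner_self_eq_norm_sq]
    calc 0 ≤ 2 * (⟪u s, u' s⟫ + L * ‖u s‖ ^ 2) * Real.exp (2 * L * s) := by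
          have : 0 ≤ ⟪u s, u' s⟫ + L * ‖u s‖ ^ 2 := by linarith
          positivity
      _ = _ := by ring
  simp only [real_inner_self_eq_norm_sq] at hmono
  refine le_of_sq_le_sq ?_ (by positivity)
  calc ‖u t‖ ^ 2 = ‖u t‖ ^ 2 * Real.exp (2 * L * t) * Real.exp (-(2 * L * t)) := by
        rw [mul_assoc, ← Real.exp_add, add_neg_cancel, Real.exp_zero, mul_one]
    _ ≤ ‖u b‖ ^ 2 * Real.exp (2 * L * b) * Real.exp (-(2 * L * t)) := by gcongr
    _ = (Real.exp (L * (b - t)) * ‖u b‖) ^ 2 := by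
        rw [mul_assoc, ← Real.exp_add, mul_pow, ← Real.exp_nat_mul, mul_comm]
        congr 2
        push_cast
        ring

end IsACPrimitive

end ACPrimitive

section Gradient

variable {E : Type*} [NormedAddCommGroup E] [InnerProductSpace ℝ E] [CompleteSpace E] {f : E → ℝ}

theorem norm_gradient_le_of_forall_abs_sub_le {L : ℝ} (hL : 0 ≤ L)
    (hf : ∀ x y, |f x - f y| ≤ L * ‖x - y‖) (x : E) : ‖gradient f x‖ ≤ L := by
  rw [gradient, LinearIsometryEquiv.norm_map]
  exact norm_fderiv_le_of_lip' ℝ hL (.of_forall fun y ↦ hf y x)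

theorem sub_inner_gradient_sub_mul_sq_le {K : ℝ} (hK : 0 ≤ K) (hf : Differentiable ℝ f)
    (hgrad : ∀ x y, ‖gradient f x - gradient f y‖ ≤ K * ‖x - y‖) (x w : E) :
    f x - ⟪gradient f x, w⟫ - K * ‖w‖ ^ 2 ≤ f (x - w) := by
  have htaylor : ‖f (x - w) - f x - ⟪gradient f x, x - w - x⟫‖ ≤ K * ‖w‖ * ‖x - w - x‖ := by
    refine (convex_closedBall x ‖w‖).norm_image_sub_le_of_norm_hasFDerivWithin_le'
      (φ := InnerProductSpace.toDual ℝ E (gradient f x))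
      (fun z _ ↦ (hf z).hasGradientAt.hasFDerivAt.hasFDerivWithinAt) (fun z hz ↦ ?_)
      (Metric.mem_closedBall_self (norm_nonneg w)) (by simp)
    rw [← map_sub, LinearIsometryEquiv.norm_map]
    exact (hgrad z x).trans (mul_le_mul_of_nonneg_left (mem_closedBall_iff_norm.1 hz) hK)
  rw [sub_sub_cancel_left, inner_neg_right, norm_neg] at htaylor
  linarith [neg_le_of_abs_le htaylor]

end Gradient

section Measurability

variable {E : Type*} [NormedAddCommGroup E] [InnerProductSpace ℝ E]

theorem countable_of_orthonormal [SeparableSpace E] {ι : Type*} {v : ι → E}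
    (hv : Orthonormal ℝ v) : Countable ι := by
  refine Pairwise.countable_of_isOpen_disjoint (s := fun i ↦ Metric.ball (v i) (1 / 2))
    (fun i j hij ↦ Metric.ball_disjoint_ball ?_) (fun _ ↦ Metric.isOpen_ball)
    (fun _ ↦ Metric.nonempty_ball.2 one_half_pos)
  have hinner : ⟪v i, v i - v j⟫ = 1 := by
    rw [inner_sub_right, hv.2 hij, sub_zero, real_inner_self_eq_norm_sq, hv.1, one_pow]
  calc (1 / 2 + 1 / 2 : ℝ) = ⟪v i, v i - v j⟫ := by rw [hinner, add_halves]
    _ ≤ ‖v i‖ * ‖v i - v j‖ := real_inner_le_norm _ _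
    _ = dist (v i) (v j) := by rw [hv.1, one_mul, dist_eq_norm]

/-- A Hilbert space version of Pettis' measurability theorem. -/
theorem aestronglyMeasurable_of_forall_inner [CompleteSpace E] [SeparableSpace E]
    {α : Type*} {m : MeasurableSpace α} {μ : Measure α} {g : α → E}
    (hg : ∀ v, AEStronglyMeasurable (fun s ↦ ⟪v, g s⟫) μ) : AEStronglyMeasurable g μ := by
  obtain ⟨w, b, -⟩ := exists_hilbertBasis ℝ E
  have := countable_of_orthonormal b.orthonormal
  refine aestronglyMeasurable_of_tendsto_ae (u := atTop)
    (f := fun (I : Finset w) s ↦ ∑ i ∈ I, b.repr (g s) i • b i) (fun I ↦ ?_)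
    (.of_forall fun s ↦ b.hasSum_repr (g s))
  simp only [b.repr_apply_apply]
  exact Finset.aestronglyMeasurable_fun_sum I fun i _ ↦ (hg (b i)).smul_const (b i)

theorem aestronglyMeasurable_gradient_comp [CompleteSpace E] [SecondCountableTopology E]
    [MeasurableSpace E] [BorelSpace E] {α : Type*} {m : MeasurableSpace α} {μ : Measure α}
    {c : E → α → ℝ} {y : α → E} (hc : Measurable (Function.uncurry c))
    (hdiff : ∀ᵐ t ∂μ, DifferentiableAt ℝ (fun x ↦ c x t) (y t)) (hy : AEMeasurable y μ) :
    AEStronglyMeasurable (fun t ↦ gradient (fun x ↦ c x t) (y t)) μ := by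
  refine aestronglyMeasurable_of_forall_inner fun v ↦ ?_
  have hr : Tendsto (fun n : ℕ ↦ (1 / (n + 1) : ℝ)) atTop (𝓝[>] 0) :=
    tendsto_nhdsWithin_iff.2 ⟨tendsto_one_div_add_atTop_nhds_zero_nat,
      .of_forall fun n ↦ mem_Ioi.2 Nat.one_div_pos_of_nat⟩
  refine aestronglyMeasurable_of_tendsto_ae (u := atTop)
    (f := fun (n : ℕ) t ↦ (1 / (n + 1) : ℝ)⁻¹ •
      (c (y t + (1 / (n + 1) : ℝ) • v) t - c (y t) t)) (fun n ↦ ?_) ?_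
  · have hcy {x : α → E} (hx : AEMeasurable x μ) : AEStronglyMeasurable (fun t ↦ c (x t) t) μ :=
      (hc.comp_aemeasurable (hx.prodMk aemeasurable_id)).aestronglyMeasurable
    exact ((hcy (hy.add_const ((1 / (n + 1) : ℝ) • v))).sub (hcy hy)).const_smul (1 / (n + 1) : ℝ)⁻¹
  · filter_upwards [hdiff] with t ht
    have hslope := (ht.hasGradientAt.hasFDerivAt.hasLineDerivAt v).tendsto_slope_zero_right.comp hr
    rwa [InnerProductSpace.toDual_apply_apply, real_inner_comm] at hslope

theorem integrableOn_smulRight_comp {K : Set ℝ} {g p : ℝ → E} {P : ℝ → E →L[ℝ] E}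
    (hK : IsCompact K) (hg : IntegrableOn g K) (hp : ContinuousOn p K) (hP : ContinuousOn P K) :
    IntegrableOn (fun t ↦ ((innerSL ℝ (g t)).smulRight (p t)).comp (P t)) K := by
  have hdom : IntegrableOn (fun t ↦ ‖g t‖ * (‖p t‖ * ‖P t‖)) K :=
    IntegrableOn.mul_continuousOn hg.norm (hp.norm.mul hP.norm) hK
  have hgm : AEStronglyMeasurable (fun t ↦ innerSL ℝ (g t)) (volume.restrict K) :=
    (innerSL ℝ).continuous.comp_aestronglyMeasurable hg.aestronglyMeasurable
  have hpm := hp.aestronglyMeasurable (μ := volume) hK.measurableSet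
  have hPm := hP.aestronglyMeasurable (μ := volume) hK.measurableSet
  refine hdom.mono' ((ContinuousLinearMap.compL ℝ E E E).aestronglyMeasurable_comp₂
    ((ContinuousLinearMap.smulRightL ℝ E E).aestronglyMeasurable_comp₂ hgm hpm) hPm)
    (.of_forall fun t ↦ ?_)
  calc ‖((innerSL ℝ (g t)).smulRight (p t)).comp (P t)‖
      ≤ ‖(innerSL ℝ (g t)).smulRight (p t)‖ * ‖P t‖ := ContinuousLinearMap.opNorm_comp_le _ _
    _ = ‖g t‖ * (‖p t‖ * ‖P t‖) := by
        rw [ContinuousLinearMap.norm_smulRight_apply, innerSL_apply_norm, mul_assoc]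

end Measurability

section AdjointPair

variable {E : Type*} [NormedAddCommGroup E] [InnerProductSpace ℝ E] {a b : ℝ} {g p q : ℝ → E}

theorem inner_normalize_self (x : E) : ⟪x, normalize x⟫ = ‖x‖ := by
  rw [NormedSpace.normalize, real_inner_smul_right, real_inner_self_eq_norm_mul_norm, ← mul_assoc,
    inv_mul_mul_self]

/-- A nonvanishing costate `p` and a variation `q` along an arc that moves in the direction of `p`
and on which the speed has gradient `g`: the equations `p' = -|p| g` and `q' = ⟪g, q⟫ p / |p|` are
adjoint to each other. -/
structure IsAdjointPair (g p q : ℝ → E) (a b : ℝ) : Prop where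
  ne_zero : ∀ t ∈ uIcc a b, p t ≠ 0
  costate : IsACPrimitive p (fun t ↦ -(‖p t‖ • g t)) a b
  variation : IsACPrimitive q (fun t ↦ ⟪g t, q t⟫ • normalize (p t)) a b

namespace IsAdjointPair

theorem inner_eq (h : IsAdjointPair g p q a b) {t : ℝ} (ht : t ∈ uIcc a b) :
    ⟪p t, q t⟫ = ⟪p b, q b⟫ := by
  have hpq := h.costate.inner h.variation
  obtain ⟨C, hC⟩ := hpq.absolutelyContinuous.const_of_ae_hasDerivAt_zero (by
    rw [uIcc, ← ae_restrict_iff' measurableSet_Icc]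
    filter_upwards [hpq.ae_hasDerivAt] with s hs
    have hcancel : ⟪p s, ⟪g s, q s⟫ • normalize (p s)⟫ + ⟪-(‖p s‖ • g s), q s⟫ = 0 := by
      rw [inner_smul_right, inner_normalize_self, inner_neg_left, real_inner_smul_left]
      ring
    rwa [← hcancel])
  exact (hC t ht).trans (hC b right_mem_uIcc).symm

variable {L t : ℝ}

theorem norm_costate_le (h : IsAdjointPair g p q a b)
    (hg : ∀ᵐ t ∂volume.restrict (uIcc a b), ‖g t‖ ≤ L) (ht : t ∈ Icc a b) :
    ‖p t‖ ≤ Real.exp (L * (b - t)) * ‖p b‖ := by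
  refine h.costate.norm_le_exp_mul_norm_right ?_ ht
  filter_upwards [hg] with s hs
  rw [norm_neg, norm_smul, norm_norm, mul_comm]
  gcongr

theorem norm_variation_le (h : IsAdjointPair g p q a b)
    (hg : ∀ᵐ t ∂volume.restrict (uIcc a b), ‖g t‖ ≤ L) (ht : t ∈ Icc a b) :
    ‖q t‖ ≤ Real.exp (L * (b - t)) * ‖q b‖ := by
  refine h.variation.norm_le_exp_mul_norm_right ?_ ht
  filter_upwards [hg, ae_restrict_mem measurableSet_Icc] with s hs hsI
  rw [norm_smul, norm_normalize_eq_one_iff.2 (h.ne_zero s hsI), mul_one]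
  exact (norm_inner_le_norm _ _).trans (by gcongr)

theorem mul_norm_sq_le_inner_normalize (h : IsAdjointPair g p q a b)
    (hg : ∀ᵐ t ∂volume.restrict (uIcc a b), ‖g t‖ ≤ L) (hp : ‖p b‖ = 1)
    (hpq : ‖q b‖ ^ 2 / 2 ≤ ⟪p b, q b⟫) (ht : t ∈ Icc a b) :
    Real.exp (-(3 * (L * (b - t)))) / 2 * ‖q t‖ ^ 2 ≤ ⟪normalize (p t), q t⟫ := by
  have htI : t ∈ uIcc a b := Icc_subset_uIcc ht
  have hpt : 0 < ‖p t‖ := norm_pos_iff.2 (h.ne_zero t htI)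
  have hp_le : ‖p t‖ ≤ Real.exp (L * (b - t)) := by
    simpa only [hp, mul_one] using h.norm_costate_le hg ht
  calc Real.exp (-(3 * (L * (b - t)))) / 2 * ‖q t‖ ^ 2
      ≤ Real.exp (-(3 * (L * (b - t)))) / 2 * (Real.exp (L * (b - t)) * ‖q b‖) ^ 2 := by
        gcongr
        exact h.norm_variation_le hg ht
    _ = (Real.exp (L * (b - t)))⁻¹ * (‖q b‖ ^ 2 / 2) := by
        rw [← Real.exp_neg, mul_pow, ← Real.exp_nat_mul, ← mul_assoc, div_mul_eq_mul_div,
          ← Real.exp_add]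
        push_cast
        ring_nf
    _ ≤ ‖p t‖⁻¹ * ⟪p b, q b⟫ := by gcongr
    _ = ⟪normalize (p t), q t⟫ := by
        rw [← h.inner_eq htI, NormedSpace.normalize, real_inner_smul_left]

end IsAdjointPair

theorem half_norm_sub_sq_le_inner {x y : E} (hx : ‖x‖ = 1) (hy : ‖y‖ ≤ 1) :
    ‖x - y‖ ^ 2 / 2 ≤ ⟪x, x - y⟫ := by
  have hy_sq : ‖y‖ ^ 2 ≤ 1 := pow_le_one₀ (norm_nonneg y) hy
  rw [norm_sub_sq_real, inner_sub_right, real_inner_self_eq_norm_sq, hx]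
  linarith

end AdjointPair

section Perturbation

variable {E : Type*} [NormedAddCommGroup E] [InnerProductSpace ℝ E]

theorem norm_smul_sub_smul_le {e q : E} {α β γ k : ℝ} (he : ‖e‖ = 1) (hα : 0 < α) (hβ : 0 ≤ β)
    (hγ : 0 ≤ γ) (hq : k * ‖q‖ ^ 2 ≤ ⟪e, q⟫) (hγα : γ ≤ α * k) (hβγ : 2 * β * γ ≤ k) :
    ‖α • e - γ • q‖ ≤ α - β * (γ ^ 2 * ‖q‖ ^ 2) := by
  set B := β * (γ ^ 2 * ‖q‖ ^ 2)
  have hexpand : ‖α • e - γ • q‖ ^ 2 = α ^ 2 - 2 * (γ * α * ⟪e, q⟫) + γ ^ 2 * ‖q‖ ^ 2 := by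
    rw [norm_sub_sq_real, real_inner_smul_left, real_inner_smul_right, norm_smul, norm_smul, he,
      mul_pow, mul_pow, Real.norm_eq_abs, Real.norm_eq_abs, sq_abs, sq_abs]
    ring
  have hquad : γ ^ 2 * ‖q‖ ^ 2 ≤ γ * α * ⟪e, q⟫ := by
    calc γ ^ 2 * ‖q‖ ^ 2 = γ * γ * ‖q‖ ^ 2 := by ring
      _ ≤ γ * (α * k) * ‖q‖ ^ 2 := by gcongr
      _ = γ * α * (k * ‖q‖ ^ 2) := by ring
      _ ≤ γ * α * ⟪e, q⟫ := by gcongr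
  have hlin : 2 * (α * B) ≤ γ * α * ⟪e, q⟫ := by
    calc 2 * (α * B) = γ * α * (2 * β * γ * ‖q‖ ^ 2) := by ring
      _ ≤ γ * α * (k * ‖q‖ ^ 2) := by gcongr
      _ ≤ γ * α * ⟪e, q⟫ := by gcongr
  have hsq : ‖α • e - γ • q‖ ^ 2 ≤ α * (α - 2 * B) := by linarith
  have hB : 0 ≤ B := by positivity
  have hB_le : 0 ≤ α - 2 * B := nonneg_of_mul_nonneg_right ((sq_nonneg _).trans hsq) hα
  exact le_of_sq_le_sq (by linarith [sq_nonneg B]) (by linarith [hB, hB_le])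

theorem hasDerivAt_sub_mul_smul {y q : ℝ → E} {e : E} {α β t : ℝ} (γ : ℝ)
    (hy : HasDerivAt y (α • e) t) (hq : HasDerivAt q (β • e) t) :
    HasDerivAt (fun s ↦ y s - (γ * s) • q s) ((α - γ * t * β) • e - γ • q t) t := by
  refine (hy.fun_sub (((hasDerivAt_id t).const_mul γ).fun_smul hq)).congr_deriv ?_
  simp only [id, mul_one]
  module

end Perturbation

section AdmissibleScale

variable {T L K δ γ : ℝ}

/-- The constant `κ` in the coercivity estimate `κ |q|² ≤ ⟪p / |p|, q⟫` for an adjoint pair over a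
time interval of length at most `T` along which the gradient of the speed is bounded by `L`. -/
noncomputable def coercivityConst (T L : ℝ) : ℝ :=
  Real.exp (-(3 * (L * T))) / 2

theorem coercivityConst_pos (T L : ℝ) : 0 < coercivityConst T L := by
  unfold coercivityConst
  positivity

/-- The smallness conditions on the size `γ` of the perturbation: `drift_le` keeps the speed of the
perturbed arc in the direction of the costate above `δ / 2`, `le_gain` lets the first-order loss of
speed absorb the transversal velocity, and `curvature_le` lets it absorb the Taylor remainder of the
admissible speed. -/
structure IsAdmissibleScale (T L K δ γ : ℝ) : Prop where
  pos : 0 < γ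
  drift_le : γ * (T * (L * (2 * Real.exp (L * T)))) ≤ δ / 2
  le_gain : γ ≤ δ / 2 * coercivityConst T L
  curvature_le : 2 * (K * T ^ 2) * γ ≤ coercivityConst T L

theorem exists_isAdmissibleScale (T L K : ℝ) (hδ : 0 < δ) : ∃ γ, IsAdmissibleScale T L K δ γ := by
  have small (a : ℝ) {b : ℝ} (hb : 0 < b) : ∀ᶠ γ : ℝ in 𝓝[>] 0, a * γ ≤ b := by
    have hlim : Tendsto (fun γ : ℝ ↦ a * γ) (𝓝 0) (𝓝 0) :=
      Continuous.tendsto' (by fun_prop) _ _ (mul_zero a)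
    exact (hlim.mono_left nhdsWithin_le_nhds).eventually_le_const hb
  have hκ := coercivityConst_pos T L
  obtain ⟨γ, hpos, hdrift, hgain, hcurv⟩ := (eventually_mem_nhdsWithin.and
    ((small (T * (L * (2 * Real.exp (L * T)))) (half_pos hδ)).and
    ((small 1 (mul_pos (half_pos hδ) hκ)).and (small (2 * (K * T ^ 2)) hκ)))).exists
  exact ⟨γ, hpos, by rwa [mul_comm], by rwa [one_mul] at hgain, hcurv⟩

end AdmissibleScale

section ExtremalFlow

variable {E : Type*} [NormedAddCommGroup E] [InnerProductSpace ℝ E] [CompleteSpace E]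
  {T L K M δ γ a b : ℝ} {c : E → ℝ → ℝ} {y p : ℝ → E} {P : ℝ → E →L[ℝ] E}

/-- The standing assumptions on the speed `f = c(·, t)` at a fixed time. -/
structure IsRegularSpeed (L K δ : ℝ) (f : E → ℝ) : Prop where
  differentiable : Differentiable ℝ f
  abs_sub_le : ∀ x y, |f x - f y| ≤ L * ‖x - y‖
  norm_gradient_sub_le : ∀ x y, ‖gradient f x - gradient f y‖ ≤ K * ‖x - y‖
  le : ∀ x, δ ≤ f x

theorem IsAdmissibleScale.norm_smul_sub_smul_le_apply_sub (hγ : IsAdmissibleScale T L K δ γ)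
    {f : E → ℝ} (hf : IsRegularSpeed L K δ f) (hL : 0 ≤ L) (hK : 0 ≤ K) (hδ : 0 < δ) {t : ℝ}
    (ht : t ∈ Icc 0 T) {e q : E} (y : E) (he : ‖e‖ = 1) (hq : ‖q‖ ≤ 2 * Real.exp (L * T))
    (heq : coercivityConst T L * ‖q‖ ^ 2 ≤ ⟪e, q⟫) :
    ‖(f y - γ * t * ⟪gradient f y, q⟫) • e - γ • q‖ ≤ f (y - (γ * t) • q) := by
  have hγ₀ := hγ.pos.le
  have hκ := coercivityConst_pos T L
  obtain ⟨ht₀, htT⟩ := ht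
  have hT := ht₀.trans htT
  have hdrift : γ * t * ⟪gradient f y, q⟫ ≤ δ / 2 :=
    calc γ * t * ⟪gradient f y, q⟫ ≤ γ * t * (‖gradient f y‖ * ‖q‖) := by
          gcongr
          exact real_inner_le_norm _ _
      _ ≤ γ * T * (L * (2 * Real.exp (L * T))) := by
          have := norm_gradient_le_of_forall_abs_sub_le hL hf.abs_sub_le y
          gcongr
      _ ≤ δ / 2 := by simpa only [mul_assoc] using hγ.drift_le
  have hspeed : δ / 2 ≤ f y - γ * t * ⟪gradient f y, q⟫ := by linarith [hf.le y]
  have htaylor := sub_inner_gradient_sub_mul_sq_le hK hf.differentiable hf.norm_gradient_sub_le y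
    ((γ * t) • q)
  rw [real_inner_smul_right, norm_smul, mul_pow, Real.norm_eq_abs, sq_abs] at htaylor
  refine (norm_smul_sub_smul_le (β := K * t ^ 2) he ((half_pos hδ).trans_le hspeed) (by positivity)
    hγ₀ heq (hγ.le_gain.trans (by gcongr)) (le_trans (by gcongr) hγ.curvature_le)).trans ?_
  linarith

/-- A solution on `[a, b]` of the Pontryagin system for the dynamics `y' = c(y, t) u`, `|u| ≤ 1`:
an extremal arc `y`, its costate `p`, and a fundamental matrix `P` of the linearization. -/
structure IsExtremalFlow (c : E → ℝ → ℝ) (y p : ℝ → E) (P : ℝ → E →L[ℝ] E) (a b : ℝ) :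
    Prop where
  ne_zero : ∀ t ∈ uIcc a b, p t ≠ 0
  state : IsACPrimitive y (fun t ↦ c (y t) t • normalize (p t)) a b
  costate : IsACPrimitive p (fun t ↦ -(‖p t‖ • gradient (fun x ↦ c x t) (y t))) a b
  fundamental : IsACPrimitive P (fun t ↦ ‖p t‖⁻¹ •
    ((innerSL ℝ (gradient (fun x ↦ c x t) (y t))).smulRight (p t)).comp (P t)) a b

namespace IsExtremalFlow

theorem isAdjointPair (h : IsExtremalFlow c y p P a b) (w : E) :
    IsAdjointPair (fun t ↦ gradient (fun x ↦ c x t) (y t)) p (fun t ↦ P t w) a b where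
  ne_zero := h.ne_zero
  costate := h.costate
  variation := by
    convert h.fundamental.clm_apply w using 2 with t
    simp only [smul_apply, ContinuousLinearMap.comp_apply, ContinuousLinearMap.smulRight_apply,
      innerSL_apply_apply, NormedSpace.normalize, smul_comm (‖p t‖⁻¹)]

theorem ae_exists_hasDerivAt_norm_le (h : IsExtremalFlow c y p P 0 T) (hL : 0 ≤ L) (hK : 0 ≤ K)
    (hδ : 0 < δ) (hc : ∀ᵐ t ∂volume.restrict (Icc 0 T), IsRegularSpeed L K δ fun x ↦ c x t)
    (hT : 0 ≤ T) (hpT : ‖p T‖ = 1) (hPT : P T = ContinuousLinearMap.id ℝ E)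
    (hγ : IsAdmissibleScale T L K δ γ) {θ : E} (hθ : ‖θ‖ ≤ 1) :
    ∀ᵐ t ∂volume.restrict (Icc 0 T), ∃ v,
      HasDerivAt (fun s ↦ y s - (γ * s) • P s (p T - θ)) v t ∧
        ‖v‖ ≤ c (y t - (γ * t) • P t (p T - θ)) t := by
  have hpair := h.isAdjointPair (p T - θ)
  have hend : P T (p T - θ) = p T - θ := by rw [hPT, ContinuousLinearMap.id_apply]
  have hend_le : ‖p T - θ‖ ≤ 2 := by linarith [norm_sub_le (p T) θ]
  have hg : ∀ᵐ t ∂volume.restrict (uIcc 0 T), ‖gradient (fun x ↦ c x t) (y t)‖ ≤ L := by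
    rw [uIcc_of_le hT]
    filter_upwards [hc] with t ht
    exact norm_gradient_le_of_forall_abs_sub_le hL ht.abs_sub_le _
  have hinner := half_norm_sub_sq_le_inner hpT hθ
  have hstate := h.state.ae_hasDerivAt
  have hvar := hpair.variation.ae_hasDerivAt
  rw [uIcc_of_le hT] at hstate hvar
  filter_upwards [hc, hstate, hvar, ae_restrict_mem measurableSet_Icc] with t ht hyt hqt htI
  refine ⟨_, hasDerivAt_sub_mul_smul γ hyt hqt, hγ.norm_smul_sub_smul_le_apply_sub ht hL hK hδ htI
    (y t) (norm_normalize_eq_one_iff.2 (h.ne_zero t (Icc_subset_uIcc htI))) ?_ ?_⟩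
  · refine (hpair.norm_variation_le hg htI).trans ?_
    rw [hend, mul_comm]
    gcongr
    linarith [htI.1]
  · refine le_trans ?_ (hpair.mul_norm_sq_le_inner_normalize hg hpT (by rwa [hend]) htI)
    unfold coercivityConst
    gcongr
    linarith [htI.1]

theorem of_integral_eq [SecondCountableTopology E] [MeasurableSpace E] [BorelSpace E] (hab : a ≤ b)
    (hc : Measurable (Function.uncurry c))
    (hdiff : ∀ᵐ t ∂volume.restrict (Icc a b), DifferentiableAt ℝ (fun x ↦ c x t) (y t))
    (hgrad : ∀ᵐ t ∂volume.restrict (Icc a b), ‖gradient (fun x ↦ c x t) (y t)‖ ≤ L)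
    (hbound : ∀ᵐ t ∂volume.restrict (Icc a b), |c (y t) t| ≤ M)
    (hy : ContinuousOn y (Icc a b)) (hp : ContinuousOn p (Icc a b))
    (hP : ContinuousOn P (Icc a b)) (hp₀ : ∀ t ∈ Icc a b, p t ≠ 0)
    (hstate : ∀ t ∈ Icc a b, y t = y a + ∫ s in a..t, (c (y s) s / ‖p s‖) • p s)
    (hcostate : ∀ t ∈ Icc a b,
      p t = p a - ∫ s in a..t, ‖p s‖ • gradient (fun x ↦ c x s) (y s))
    (hfundamental : ∀ t ∈ Icc a b, P t = P a + ∫ s in a..t,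
      ‖p s‖⁻¹ • ((innerSL ℝ (gradient (fun x ↦ c x s) (y s))).smulRight (p s)).comp (P s)) :
    IsExtremalFlow c y p P a b := by
  rw [← uIcc_of_le hab] at *
  have hym : AEMeasurable y (volume.restrict (uIcc a b)) := hy.aemeasurable measurableSet_uIcc
  have hg : IntegrableOn (fun t ↦ gradient (fun x ↦ c x t) (y t)) (uIcc a b) :=
    .of_bound isCompact_uIcc.measure_lt_top
      (aestronglyMeasurable_gradient_comp hc hdiff hym) L hgrad
  have hcy : IntegrableOn (fun t ↦ c (y t) t) (uIcc a b) :=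
    .of_bound isCompact_uIcc.measure_lt_top
      (hc.comp_aemeasurable (hym.prodMk aemeasurable_id)).aestronglyMeasurable M hbound
  have hinv : ContinuousOn (fun t ↦ ‖p t‖⁻¹) (uIcc a b) :=
    hp.norm.inv₀ fun t ht ↦ norm_ne_zero_iff.2 (hp₀ t ht)
  refine ⟨hp₀, .of_integral_eq ?_ ?_, .of_integral_eq ?_ ?_, .of_integral_eq ?_ hfundamental⟩
  · exact hcy.smul_continuousOn (hinv.smul hp) isCompact_uIcc
  · simpa only [div_eq_mul_inv, NormedSpace.normalize, smul_smul] using hstate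
  · exact (hg.continuousOn_smul hp.norm isCompact_uIcc).neg
  · simpa only [intervalIntegral.integral_neg, ← sub_eq_add_neg] using hcostate
  · exact (integrableOn_smulRight_comp isCompact_uIcc hg hp hP).continuousOn_smul hinv
      isCompact_uIcc

end IsExtremalFlow

end ExtremalFlow

theorem stmt_13_general {T L₁ N₁ δ : ℝ} (hT : 0 ≤ T) (hL₁ : 0 ≤ L₁) (hN₁ : 0 ≤ N₁) (hδ : 0 < δ) :
    ∃ γ : ℝ, 0 < γ ∧
      ∀ (E : Type*) [NormedAddCommGroup E] [InnerProductSpace ℝ E] [CompleteSpace E]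
        (c : E → ℝ → ℝ),
      (∀ᵐ t ∂volume.restrict (Icc 0 T), IsRegularSpeed L₁ N₁ δ fun x ↦ c x t) →
      ∀ (y₀ p₀ : ℝ → E) (P : ℝ → E →L[ℝ] E),
      IsExtremalFlow c y₀ p₀ P 0 T → ‖p₀ T‖ = 1 → P T = ContinuousLinearMap.id ℝ E →
      ∀ θ : E, ‖θ‖ ≤ 1 →
        ∀ᵐ t ∂volume.restrict (Icc 0 T), ∃ v : E,
          HasDerivAt (fun s ↦ y₀ s - (γ * s) • P s (p₀ T - θ)) v t ∧
          ‖v‖ ≤ c (y₀ t - (γ * t) • P t (p₀ T - θ)) t := by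
  obtain ⟨γ, hγ⟩ := exists_isAdmissibleScale T L₁ N₁ hδ
  exact ⟨γ, hγ.pos, fun E _ _ _ c hc y₀ p₀ P h hpT hPT θ hθ ↦
    h.ae_exists_hasDerivAt_norm_le hL₁ hN₁ hδ hc hT hpT hPT hγ hθ⟩

end

/-- Key perturbation estimate for the interior ball regularization.
Given constants `T > 0`, `L₁, N₁ ≥ 0`, `0 < δ ≤ M₁`, there exists `γ > 0` depending
only on these constants such that: for any dimension `N ≥ 1`, any Borel measurable
velocity `c : ℝ^N × [0,T] → ℝ` which for a.e. `t` is `C¹` in `x` with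
`|c(x,t) − c(y,t)| ≤ L₁|x−y|`, `|D_x c(x,t) − D_x c(y,t)| ≤ N₁|x−y|`,
`δ ≤ c ≤ M₁`, any extremal pair `(y₀, p₀)` of the Pontryagin system
`ẏ₀ = c(y₀,t) p₀/|p₀|`, `ṗ₀ = −D_x c(y₀,t)|p₀|` with `p₀ ≠ 0`, `|p₀(T)| = 1`, and
any fundamental solution `P` of `Ṗ = (1/|p₀|) p₀ (D_x c(y₀,t))ᵀ P`, `P(T) = Id`
(absolute continuity and a.e. ODEs encoded by the equivalent integral equations;
matrices acting on `ℝ^N` represented as continuous linear maps, with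
`D_x c` the gradient and the outer product `p qᵀ` being `v ↦ ⟪q, v⟫ p`),
for every `θ` in the closed unit ball, the perturbed arc
`y_θ(t) = y₀(t) − γ t P(t)(θ₀ − θ)` (with `θ₀ = p₀(T)`) satisfies
`|ẏ_θ(t)| ≤ c(y_θ(t), t)` for a.e. `t ∈ [0,T]`. -/
theorem stmt_13 (T L₁ N₁ M₁ δ : ℝ)
    (hT : 0 < T) (hL₁ : 0 ≤ L₁) (hN₁ : 0 ≤ N₁) (hδ : 0 < δ) (hδM : δ ≤ M₁) :
    ∃ γ : ℝ, 0 < γ ∧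
      ∀ (N : ℕ), 1 ≤ N →
      ∀ (c : EuclideanSpace ℝ (Fin N) → ℝ → ℝ),
      Measurable (Function.uncurry c) →
      (∀ᵐ t ∂(volume.restrict (Set.Icc 0 T)),
        ContDiff ℝ 1 (fun x => c x t) ∧
        ∀ x y : EuclideanSpace ℝ (Fin N),
          |c x t - c y t| ≤ L₁ * ‖x - y‖ ∧
          ‖gradient (fun z => c z t) x - gradient (fun z => c z t) y‖ ≤ N₁ * ‖x - y‖ ∧
          δ ≤ c x t ∧ c x t ≤ M₁) →
      ∀ (y₀ p₀ : ℝ → EuclideanSpace ℝ (Fin N))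
        (P : ℝ → (EuclideanSpace ℝ (Fin N) →L[ℝ] EuclideanSpace ℝ (Fin N))),
      ContinuousOn y₀ (Set.Icc 0 T) →
      ContinuousOn p₀ (Set.Icc 0 T) →
      ContinuousOn P (Set.Icc 0 T) →
      (∀ t ∈ Set.Icc (0:ℝ) T, p₀ t ≠ 0) →
      ‖p₀ T‖ = 1 →
      (∀ t ∈ Set.Icc (0:ℝ) T,
        y₀ t = y₀ 0 + ∫ s in (0:ℝ)..t, (c (y₀ s) s / ‖p₀ s‖) • p₀ s) →
      (∀ t ∈ Set.Icc (0:ℝ) T,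
        p₀ t = p₀ 0 - ∫ s in (0:ℝ)..t, ‖p₀ s‖ • gradient (fun x => c x s) (y₀ s)) →
      (∀ t ∈ Set.Icc (0:ℝ) T,
        P t = P 0 + ∫ s in (0:ℝ)..t,
          ‖p₀ s‖⁻¹ •
            (((innerSL ℝ (gradient (fun x => c x s) (y₀ s))).smulRight (p₀ s)).comp
              (P s))) →
      P T = ContinuousLinearMap.id ℝ (EuclideanSpace ℝ (Fin N)) →
      ∀ θ : EuclideanSpace ℝ (Fin N), ‖θ‖ ≤ 1 →
        ∀ᵐ t ∂(volume.restrict (Set.Icc 0 T)),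
          ∃ v : EuclideanSpace ℝ (Fin N),
            HasDerivAt (fun s : ℝ => y₀ s - (γ * s) • (P s) (p₀ T - θ)) v t ∧
            ‖v‖ ≤ c (y₀ t - (γ * t) • (P t) (p₀ T - θ)) t := by
  obtain ⟨γ, hγ, h⟩ := stmt_13_general hT.le hL₁ hN₁ hδ
  refine ⟨γ, hγ, fun N _ c hcm hc y₀ p₀ P hy hp hP hp₀ hpT hyi hpi hPi hPT ↦ ?_⟩
  have hreg : ∀ᵐ t ∂volume.restrict (Set.Icc 0 T), IsRegularSpeed L₁ N₁ δ fun x ↦ c x t :=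
    hc.mono fun t ht ↦ ⟨ht.1.differentiable one_ne_zero, fun x y ↦ (ht.2 x y).1,
      fun x y ↦ (ht.2 x y).2.1, fun x ↦ (ht.2 x x).2.2.1⟩
  have hbound : ∀ᵐ t ∂volume.restrict (Set.Icc 0 T), |c (y₀ t) t| ≤ M₁ :=
    hc.mono fun t ht ↦ have ⟨_, _, hlower, hupper⟩ := ht.2 (y₀ t) (y₀ t)
      abs_le.2 ⟨by linarith, hupper⟩
  exact h _ c hreg y₀ p₀ P (.of_integral_eq hT.le hcm
    (hreg.mono fun _ ht ↦ ht.differentiable _)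
    (hreg.mono fun _ ht ↦ norm_gradient_le_of_forall_abs_sub_le hL₁ ht.abs_sub_le _)
    hbound hy hp hP hp₀ hyi hpi hPi) hpT hPT
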